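/- arXiv:2403.17952 — 2 statements merged into one kernel-verified Lean document; each statement's English description precedes it below -/
import Mathlib

section
/- Let (k_1,...,k_r) be a composition of positive integers, l ≥ 0 an integer and n ≥ 1 an integer. Then Σ_{n ≥ n_1 ≥ n_2 ≥ ... ≥ n_r ≥ 1} Π_{j=1}^r 1/(n_j + l)^{k_j} = (−1)^r Σ_{j=0}^r (−1)^j ζ*_{n+l}(k_1,...,k_j) ζ_l(k_r, k_{r−1},...,k_{j+1}). -/
/-!
Put `N = n + l`. Shifting the summation variables by `l`, the left side becomes the star sum over
`N ≥ m₁ ≥ ⋯ ≥ m_r > l` (`tailStar l N`). The identity is proved by induction on `l`.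

* For `l = 0` every `ζ_0` of a nonempty list vanishes, so only the term `j = r` survives and both
  sides equal `ζ*_N(k₁, …, k_r)`.
* Both sides, say `X_l`, satisfy the same recursion in the lower bound:
  `X_{l+1}(k₁, …, k_r) = X_l(k₁, …, k_r) - (l+1)^{-k_r} X_l(k₁, …, k_{r-1})`.
  On the left the subtracted term accounts for the tuples with `m_r = l + 1`
  (`tailStar_lower_succ`, which needs `l + 1 ≤ N`); on the right it comes from splitting off the
  largest summation index in `ζ_{l+1}(k_r, …)` (`altSum_lower_succ`).
-/

open scoped BigOperators

/-- Generalized harmonic number `H_n^{(k)} = Σ_{j=1}^n 1/j^k`. -/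
noncomputable def genH (n k : ℕ) : ℝ := ∑ j ∈ Finset.Icc 1 n, 1 / (j : ℝ) ^ k

/-- Unsigned Stirling numbers of the first kind. -/
def stirling1 : ℕ → ℕ → ℕ
  | 0, 0 => 1
  | 0, _ + 1 => 0
  | _ + 1, 0 => 0
  | n + 1, k + 1 => stirling1 n k + n * stirling1 n (k + 1)

/-- Complete exponential Bell polynomials (`x` indexed from 1). -/
noncomputable def bellY (x : ℕ → ℝ) : ℕ → ℝ
  | 0 => 1
  | m + 1 =>
    ∑ j ∈ (Finset.range (m + 1)).attach,
      (Nat.choose m j.1 : ℝ) * x (m + 1 - j.1) * bellY x j.1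
decreasing_by
  have := Finset.mem_range.mp j.2
  omega

/-- Bell number `Y_k(n) = Y_k(H_n, 1!H_n^{(2)}, ..., (k-1)!H_n^{(k)})`. -/
noncomputable def bellNum (k n : ℕ) : ℝ :=
  bellY (fun i => (Nat.factorial (i - 1) : ℝ) * genH n i) k

/-- Multiple harmonic-type sum `ζ*_n(k₁,...,k_r; z)`. -/
noncomputable def zstarZ (z : ℝ) : ℕ → List ℕ → ℝ
  | _, [] => 1
  | n, [k] => ∑ m ∈ Finset.Icc 1 n, z ^ m / (m : ℝ) ^ k
  | n, k :: ks => ∑ m ∈ Finset.Icc 1 n, (1 / (m : ℝ) ^ k) * zstarZ z m ks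

/-- Multiple harmonic star sum `ζ*_n(k₁,...,k_r)`. -/
noncomputable def zstar (n : ℕ) (ks : List ℕ) : ℝ := zstarZ 1 n ks

/-- Multiple harmonic sum (strict) `ζ_n(k₁,...,k_r)`. -/
noncomputable def zmhs : ℕ → List ℕ → ℝ
  | _, [] => 1
  | n, k :: ks => ∑ m ∈ Finset.Icc 1 n, (1 / (m : ℝ) ^ k) * zmhs (m - 1) ks

/-- Weakly decreasing tuples `n ≥ f 0 ≥ f 1 ≥ ... ≥ f (r-1) ≥ 1`. -/
def decT (n r : ℕ) : Finset (Fin r → ℕ) :=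
  (Fintype.piFinset fun _ => Finset.Icc 1 n).filter fun f =>
    (∀ i : Fin r, 1 ≤ f i ∧ f i ≤ n) ∧ ∀ i j : Fin r, i ≤ j → f j ≤ f i

/-- `m`-fold iterated integral of `f t_m / (t_1 ⋯ t_m)` over `z > t_1 > ⋯ > t_m > 0`. -/
noncomputable def iterInt (f : ℝ → ℝ) : ℕ → ℝ → ℝ
  | 0, z => f z
  | m + 1, z => ∫ t in (0:ℝ)..z, iterInt f m t / t

/-- The weakly decreasing sum over `N ≥ m₁ ≥ ⋯ ≥ m_r > l` of `∏ 1 / m_j ^ k_j`. -/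
noncomputable def tailStar (l : ℕ) : ℕ → List ℕ → ℝ
  | _, [] => 1
  | N, k :: ks => ∑ m ∈ Finset.Ioc l N, (1 / (m : ℝ) ^ k) * tailStar l m ks

/-- The alternating sum on the right of the theorem, with `N` in place of `n + l`. -/
noncomputable def altSum (l N : ℕ) (ks : List ℕ) : ℝ :=
  (-1 : ℝ) ^ ks.length *
    ∑ j ∈ Finset.range (ks.length + 1),
      (-1 : ℝ) ^ j * zstar N (ks.take j) * zmhs l ((ks.drop j).reverse)

theorem zstar_nil (n : ℕ) : zstar n [] = 1 := by simp [zstar, zstarZ]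

theorem zstar_cons (n k : ℕ) (ks : List ℕ) :
    zstar n (k :: ks) = ∑ m ∈ Finset.Icc 1 n, (1 / (m : ℝ) ^ k) * zstar m ks := by
  cases ks <;> simp [zstar, zstarZ]

theorem zstar_eq_tailStar (ks : List ℕ) (n : ℕ) : zstar n ks = tailStar 0 n ks := by
  induction ks generalizing n with
  | nil => simp [zstar_nil, tailStar]
  | cons k ks ih =>
    rw [zstar_cons, tailStar]
    exact Finset.sum_congr (by ext; simp [Nat.succ_le_iff]) fun m _ => by rw [ih]

/-- Only `m₁ = ⋯ = m_r = l + 1` is possible when the upper bound is `l + 1`, so appending an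
exponent multiplies by a single factor. -/
theorem tailStar_succ_append (l k : ℕ) (ks : List ℕ) :
    tailStar l (l + 1) (ks ++ [k]) = 1 / ((l + 1 : ℕ) : ℝ) ^ k * tailStar l (l + 1) ks := by
  induction ks with
  | nil => simp [tailStar]
  | cons a ks ih =>
    simp only [List.cons_append, tailStar, Nat.Ioc_succ_singleton, Finset.sum_singleton, ih]
    ring

theorem sum_Ioc_eq_add (l N : ℕ) (h : l + 1 ≤ N) (f : ℕ → ℝ) :
    ∑ m ∈ Finset.Ioc l N, f m = f (l + 1) + ∑ m ∈ Finset.Ioc (l + 1) N, f m := by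
  have : Finset.Ioc l N = insert (l + 1) (Finset.Ioc (l + 1) N) := by
    ext x
    simp only [Finset.mem_Ioc, Finset.mem_insert]
    omega
  rw [this, Finset.sum_insert (by simp)]

/-- Raising the lower bound from `l` to `l + 1` removes exactly the tuples whose smallest
entry `m_r` equals `l + 1`. -/
theorem tailStar_lower_succ (l k : ℕ) (ks : List ℕ) (N : ℕ) (h : l + 1 ≤ N) :
    tailStar (l + 1) N (ks ++ [k]) =
      tailStar l N (ks ++ [k]) - 1 / ((l + 1 : ℕ) : ℝ) ^ k * tailStar l N ks := by
  induction ks generalizing N with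
  | nil =>
    simp only [List.nil_append, tailStar]
    rw [sum_Ioc_eq_add l N h]
    ring
  | cons a ks ih =>
    simp only [List.cons_append, tailStar]
    rw [sum_Ioc_eq_add l N h, sum_Ioc_eq_add l N h, tailStar_succ_append]
    have : ∀ m ∈ Finset.Ioc (l + 1) N,
        1 / (m : ℝ) ^ a * tailStar (l + 1) m (ks ++ [k]) =
          1 / (m : ℝ) ^ a * tailStar l m (ks ++ [k]) -
            1 / ((l + 1 : ℕ) : ℝ) ^ k * (1 / (m : ℝ) ^ a * tailStar l m ks) := by
      intro m hm
      rw [ih m (Finset.mem_Ioc.mp hm).1.le]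
      ring
    rw [Finset.sum_congr rfl this, Finset.sum_sub_distrib, ← Finset.mul_sum]
    ring

theorem zmhs_succ_cons (l k : ℕ) (ks : List ℕ) :
    zmhs (l + 1) (k :: ks) = zmhs l (k :: ks) + 1 / ((l + 1 : ℕ) : ℝ) ^ k * zmhs l ks := by
  simp only [zmhs]
  rw [Finset.sum_Icc_succ_top (by omega), Nat.add_sub_cancel]

theorem altSum_append (l N k : ℕ) (ks : List ℕ) :
    altSum l N (ks ++ [k]) =
      zstar N (ks ++ [k]) - (-1 : ℝ) ^ ks.length * ∑ j ∈ Finset.range (ks.length + 1),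
        (-1 : ℝ) ^ j * zstar N (ks.take j) * zmhs l (k :: (ks.drop j).reverse) := by
  have hlen : (ks ++ [k]).length = ks.length + 1 := by simp
  have hterm : ∀ j ∈ Finset.range (ks.length + 1),
      (-1 : ℝ) ^ j * zstar N ((ks ++ [k]).take j) * zmhs l (((ks ++ [k]).drop j).reverse) =
        (-1 : ℝ) ^ j * zstar N (ks.take j) * zmhs l (k :: (ks.drop j).reverse) := by
    intro j hj
    have hj' : j ≤ ks.length := Nat.lt_succ_iff.mp (Finset.mem_range.mp hj)
    rw [List.take_append_of_le_length hj', List.drop_append_of_le_length hj']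
    simp
  have hsq : (-1 : ℝ) ^ (ks.length + 1) * (-1 : ℝ) ^ (ks.length + 1) = 1 := by
    rw [← mul_pow]; simp
  rw [altSum, hlen, Finset.sum_range_succ, Finset.sum_congr rfl hterm, ← hlen,
    List.take_length, List.drop_length, hlen, List.reverse_nil, zmhs, mul_add, mul_one,
    ← mul_assoc ((-1 : ℝ) ^ (ks.length + 1)) ((-1 : ℝ) ^ (ks.length + 1)), hsq]
  ring

/-- `altSum` obeys the same recursion in `l` as `tailStar`. -/
theorem altSum_lower_succ (l k : ℕ) (ks : List ℕ) (N : ℕ) :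
    altSum (l + 1) N (ks ++ [k]) =
      altSum l N (ks ++ [k]) - 1 / ((l + 1 : ℕ) : ℝ) ^ k * altSum l N ks := by
  rw [altSum_append, altSum_append, altSum]
  simp only [zmhs_succ_cons, mul_add, Finset.sum_add_distrib]
  have : ∀ j ∈ Finset.range (ks.length + 1),
      (-1 : ℝ) ^ j * zstar N (ks.take j) *
          (1 / ((l + 1 : ℕ) : ℝ) ^ k * zmhs l (ks.drop j).reverse) =
        1 / ((l + 1 : ℕ) : ℝ) ^ k *
          ((-1 : ℝ) ^ j * zstar N (ks.take j) * zmhs l (ks.drop j).reverse) :=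
    fun j _ => by ring
  rw [Finset.sum_congr rfl this, ← Finset.mul_sum]
  ring

theorem altSum_nil (l N : ℕ) : altSum l N [] = 1 := by
  simp [altSum, zstar_nil, zmhs]

theorem tailStar_eq_altSum (l N : ℕ) (h : l ≤ N) (ks : List ℕ) :
    tailStar l N ks = altSum l N ks := by
  induction l generalizing ks with
  | zero =>
    rcases List.eq_nil_or_concat ks with rfl | ⟨ks, k, rfl⟩
    · rw [altSum_nil, tailStar]
    · rw [List.concat_eq_append, altSum_append, zstar_eq_tailStar]
      simp [zmhs]
  | succ l ih =>
    rcases List.eq_nil_or_concat ks with rfl | ⟨ks, k, rfl⟩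
    · rw [altSum_nil, tailStar]
    · rw [List.concat_eq_append, altSum_lower_succ, tailStar_lower_succ l k ks N h,
        ih (by omega), ih (by omega)]

theorem mem_decT {n r : ℕ} {f : Fin r → ℕ} :
    f ∈ decT n r ↔ (∀ i, 1 ≤ f i ∧ f i ≤ n) ∧ ∀ i j : Fin r, i ≤ j → f j ≤ f i := by
  simp [decT, Fintype.mem_piFinset]

/-- Choosing a tuple in `decT n (r + 1)` amounts to choosing its largest entry `m ≤ n` and then
a tuple in `decT m r`. -/
theorem sum_decT_succ (n r : ℕ) (F : (Fin (r + 1) → ℕ) → ℝ) :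
    ∑ f ∈ decT n (r + 1), F f =
      ∑ m ∈ Finset.Icc 1 n, ∑ g ∈ decT m r, F (Fin.cons m g) := by
  rw [Finset.sum_sigma']
  refine Finset.sum_bij' (fun f _ => ⟨f 0, Fin.tail f⟩) (fun p _ => Fin.cons p.1 p.2)
    ?_ ?_ ?_ ?_ ?_
  · intro f hf
    obtain ⟨h1, h2⟩ := mem_decT.mp hf
    simp only [Finset.mem_sigma, Finset.mem_Icc, mem_decT, Fin.tail]
    exact ⟨h1 0, fun i => ⟨(h1 _).1, h2 _ _ (Fin.zero_le _)⟩,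
      fun i j hij => h2 _ _ (Fin.succ_le_succ_iff.mpr hij)⟩
  · rintro ⟨m, g⟩ hp
    simp only [Finset.mem_sigma, Finset.mem_Icc, mem_decT] at hp
    obtain ⟨hm, h1, h2⟩ := hp
    refine mem_decT.mpr ⟨fun i => ?_, fun i j => ?_⟩
    · refine Fin.cases ?_ (fun i => ?_) i
      · simpa using hm
      · simpa using ⟨(h1 i).1, (h1 i).2.trans hm.2⟩
    · refine Fin.cases ?_ (fun i => ?_) i <;> refine Fin.cases ?_ (fun j => ?_) j
      · simp
      · simpa using (h1 j).2
      · intro hij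
        exact absurd hij (by simp)
      · intro hij
        simpa using h2 i j (Fin.succ_le_succ_iff.mp hij)
  · intro f _
    exact Fin.cons_self_tail f
  · rintro ⟨m, g⟩ _
    simp
  · intro f _
    simp

theorem sum_decT_eq_tailStar (l : ℕ) (ks : List ℕ) (n : ℕ) :
    (∑ f ∈ decT n ks.length, ∏ i : Fin ks.length, 1 / ((f i : ℝ) + (l : ℝ)) ^ ks.get i) =
      tailStar l (n + l) ks := by
  induction ks generalizing n with
  | nil =>
    have : decT n ([] : List ℕ).length = {fun i => i.elim0} := by
      ext f
      rw [mem_decT, Finset.mem_singleton]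
      exact ⟨fun _ => funext fun i => i.elim0, fun _ => ⟨fun i => i.elim0, fun i => i.elim0⟩⟩
    rw [this]
    simp [tailStar]
  | cons k ks ih =>
    have hshift : ∑ m ∈ Finset.Ioc l (n + l), (1 / (m : ℝ) ^ k) * tailStar l m ks =
        ∑ m ∈ Finset.Icc 1 n, (1 / ((m + l : ℕ) : ℝ) ^ k) * tailStar l (m + l) ks := by
      symm
      refine Finset.sum_bij (fun m _ => m + l) ?_ ?_ ?_ ?_
      · intro m hm
        simp only [Finset.mem_Icc, Finset.mem_Ioc] at hm ⊢
        omega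
      · intro a _ b _ hab
        exact Nat.add_right_cancel hab
      · intro b hb
        simp only [Finset.mem_Ioc] at hb
        exact ⟨b - l, by simp only [Finset.mem_Icc]; omega, by omega⟩
      · intro m _
        rfl
    rw [tailStar, hshift]
    refine (sum_decT_succ n ks.length _).trans (Finset.sum_congr rfl fun m _ => ?_)
    rw [← ih m, Finset.mul_sum]
    refine Finset.sum_congr rfl fun g _ => ?_
    refine (Fin.prod_univ_succ _).trans ?_
    simp

/-- Lemma 3.3: shifted multiple harmonic star sums in terms of
`ζ*_{n+l}` and `ζ_l`. -/
theorem shifted_mhss (ks : List ℕ) (hks : ∀ k ∈ ks, 0 < k) (l n : ℕ) (hn : 0 < n) :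
    (∑ f ∈ decT n ks.length, ∏ i : Fin ks.length, 1 / ((f i : ℝ) + (l : ℝ)) ^ ks.get i) =
      (-1 : ℝ) ^ ks.length *
        ∑ j ∈ Finset.range (ks.length + 1),
          (-1 : ℝ) ^ j * zstar (n + l) (ks.take j) * zmhs l ((ks.drop j).reverse) := by
  rw [sum_decT_eq_tailStar, tailStar_eq_altSum l (n + l) (Nat.le_add_left l n), altSum]
end

section
/- Let a ≠ 0 and z > 0 be real numbers and m, j positive integers. Then the m-fold iterated integral ∫_{z > t_1 > t_2 > ... > t_m > 0} ((a t_m + 1)^j − 1)/(t_1 t_2 ··· t_m) dt_m ··· dt_1 = (−1)^{m−1} Σ_{l=1}^j ((az+1)^l − 1) · Σ_{h=0}^{m−1} (−1)^h (Y_h(j)/h!) (s(l, m−h)/l!). -/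
/-!
Write `w_l = (a z + 1)^l - 1`, and let `F (m, j)` be the `m`-fold iterated integral in question, with
`F (0, j) = w_j`. Expanding `(a t + 1)^j` by the binomial theorem and integrating term by term gives
`F (m, j) = Σ_k C(j, k) (a z)^k / k^m` (`iterInt_expand`), from which
`F (m + 1, j + 1) = F (m + 1, j) + F (m, j + 1) / (j + 1)` (`expansion_rec`), with `F (m, 0) = 0`.
It remains to see that the right-hand side satisfies the same recurrence.

For this let `Y_n = Σ_h (Y_h(n) / h!) X^h` and `S_l = Σ_i (-1)^i (s(l, i) / l!) X^i`. For `l ≥ 1` the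
coefficient of `w_l` on the right-hand side is the coefficient of `X^m` in `-Y_j S_l`
(`coeff_eq`). The recurrence defining the Bell polynomials says
`Y_n' = Y_n · Σ_i H_n^{(i+1)} X^i`; since a linear differential equation has only one power series
solution with given constant term, `(1 - X / (n + 1)) Y_{n+1} = Y_n` (`bellSer_succ`). This is
`Y_n = ∏_{k ≤ n} (1 - X / k)⁻¹`, and it supplies the recurrence for each fixed `l ≤ j`. For the new
index `l = j + 1`, the product `Y_j S_{j+1}` collapses to `-X / (j + 1)` (`bellSer_mul_stirSer`), which
contributes nothing when the exponent of `X` is at least `2` and `w_{j+1} / (j + 1)` when it is `1`.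
-/

open scoped BigOperators

/-! ### Generating series of Bell and Stirling numbers -/

open PowerSeries in
/-- A power series solution of `Z' = Z A` is determined by its constant term. -/
lemma powerSeries_ode_unique {A Z W : PowerSeries ℝ}
    (hZ : derivative ℝ Z = Z * A) (hW : derivative ℝ W = W * A)
    (h0 : coeff 0 Z = coeff 0 W) : Z = W := by
  ext n
  induction n using Nat.strong_induction_on with
  | _ n ih =>
    rcases n with _ | n
    · exact h0
    · have h1 := congrArg (coeff n) hZ
      have h2 := congrArg (coeff n) hW
      rw [coeff_derivative, coeff_mul] at h1 h2
      have h3 : ∑ p ∈ Finset.HasAntidiagonal.antidiagonal n, coeff p.1 Z * coeff p.2 A =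
          ∑ p ∈ Finset.HasAntidiagonal.antidiagonal n, coeff p.1 W * coeff p.2 A := by
        refine Finset.sum_congr rfl fun p hp => ?_
        have := Finset.HasAntidiagonal.mem_antidiagonal.mp hp
        rw [ih p.1 (by omega)]
      have h4 : ((n : ℝ) + 1) ≠ 0 := by positivity
      exact mul_right_cancel₀ h4 (h1.trans (h3.trans h2.symm))

/-- The exponential generating series `Σ_h (Y_h(n) / h!) X^h` of the Bell numbers. -/
noncomputable def bellSer (n : ℕ) : PowerSeries ℝ :=
  PowerSeries.mk fun h => bellNum h n / (Nat.factorial h : ℝ)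

/-- The power sum series `Σ_i H_n^{(i+1)} X^i`, the logarithmic derivative of `bellSer n`. -/
noncomputable def harmSer (n : ℕ) : PowerSeries ℝ :=
  PowerSeries.mk fun i => genH n (i + 1)

/-- The series `Σ_i (-1)^i (s(l, i) / l!) X^i`. -/
noncomputable def stirSer (l : ℕ) : PowerSeries ℝ :=
  PowerSeries.mk fun i => (-1 : ℝ) ^ i * ((stirling1 l i : ℝ) / (Nat.factorial l : ℝ))

lemma bellNum_zero (n : ℕ) : bellNum 0 n = 1 := by
  simp [bellNum, bellY]

lemma bellNum_succ (m n : ℕ) : bellNum (m + 1) n =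
    ∑ j ∈ Finset.range (m + 1),
      (Nat.choose m j : ℝ) * ((Nat.factorial (m - j) : ℝ) * genH n (m + 1 - j)) * bellNum j n := by
  unfold bellNum
  rw [bellY]
  rw [Finset.sum_attach (Finset.range (m + 1)) (fun j => (Nat.choose m j : ℝ) *
    ((Nat.factorial (m + 1 - j - 1) : ℝ) * genH n (m + 1 - j)) *
      bellY (fun i => (Nat.factorial (i - 1) : ℝ) * genH n i) j)]
  refine Finset.sum_congr rfl fun j _ => ?_
  rw [show m + 1 - j - 1 = m - j by omega]

lemma derivative_bellSer (n : ℕ) :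
    PowerSeries.derivative ℝ (bellSer n) = bellSer n * harmSer n := by
  ext m
  rw [PowerSeries.coeff_derivative, PowerSeries.coeff_mul,
    Finset.Nat.sum_antidiagonal_eq_sum_range_succ_mk]
  simp only [bellSer, harmSer, PowerSeries.coeff_mk]
  rw [bellNum_succ, Finset.sum_div, Finset.sum_mul]
  refine Finset.sum_congr rfl fun j hj => ?_
  have hj' : j ≤ m := by have := Finset.mem_range.mp hj; omega
  rw [Nat.cast_choose ℝ hj', show m + 1 - j = m - j + 1 by omega, Nat.factorial_succ]
  have h1 := Nat.factorial_ne_zero j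
  have h2 := Nat.factorial_ne_zero m
  have h3 := Nat.factorial_ne_zero (m - j)
  push_cast
  field_simp

lemma genH_succ (n k : ℕ) : genH (n + 1) k = genH n k + (1 / ((n : ℝ) + 1)) ^ k := by
  unfold genH
  rw [Finset.sum_Icc_succ_top (by omega)]
  push_cast
  rw [one_div_pow]

/-- The factor `1 - X / (n + 1)`. -/
noncomputable def linFac (n : ℕ) : PowerSeries ℝ :=
  1 - PowerSeries.C (1 / ((n : ℝ) + 1)) * PowerSeries.X

/-- Passing from `n` to `n + 1` adds the geometric series `c / (1 - c X)` with `c = 1 / (n + 1)`. -/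
lemma linFac_mul_harmSer (n : ℕ) : linFac n * harmSer (n + 1) =
    linFac n * harmSer n + PowerSeries.C (1 / ((n : ℝ) + 1)) := by
  ext m
  rcases m with _ | m
  · simp [linFac, harmSer, sub_mul, mul_assoc, genH_succ]
  · simp only [linFac, harmSer, sub_mul, mul_assoc, map_sub, map_add, one_mul,
      PowerSeries.coeff_C_mul, PowerSeries.coeff_succ_X_mul, PowerSeries.coeff_mk, genH_succ,
      PowerSeries.coeff_C, if_neg (Nat.succ_ne_zero m)]
    ring

lemma derivative_linFac (n : ℕ) :
    PowerSeries.derivative ℝ (linFac n) = - PowerSeries.C (1 / ((n : ℝ) + 1)) := by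
  simp [linFac]

lemma bellSer_succ (n : ℕ) : linFac n * bellSer (n + 1) = bellSer n := by
  refine powerSeries_ode_unique (A := harmSer n) ?_ (derivative_bellSer n) ?_
  · rw [Derivation.leibniz, derivative_linFac, derivative_bellSer, smul_eq_mul,
      smul_eq_mul]
    linear_combination bellSer (n + 1) * linFac_mul_harmSer n
  · simp [linFac, bellSer, bellNum_zero]

lemma bellSer_zero : bellSer 0 = 1 := by
  refine powerSeries_ode_unique (A := harmSer 0) (derivative_bellSer 0) ?_ ?_
  · have : harmSer 0 = 0 := by ext i; simp [harmSer, genH]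
    rw [this, Derivation.map_one_eq_zero, mul_zero]
  · simp [bellSer, bellNum_zero]

lemma stirling1_succ_zero (n : ℕ) : stirling1 (n + 1) 0 = 0 := by
  simp [stirling1]

/-- `S_{n+2} = (n + 1)/(n + 2) · (1 - X/(n + 1)) · S_{n+1}`, the Stirling recurrence. -/
lemma stirSer_succ (n : ℕ) : stirSer (n + 2) =
    PowerSeries.C (((n : ℝ) + 1) / ((n : ℝ) + 2)) * (linFac n * stirSer (n + 1)) := by
  have h1 := Nat.factorial_ne_zero n
  have h2 : (n : ℝ) + 1 + 1 ≠ 0 := by positivity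
  have h3 : (n : ℝ) + 2 ≠ 0 := by positivity
  ext m
  rcases m with _ | m
  · simp [stirSer, stirling1_succ_zero]
  · simp only [linFac, stirSer, sub_mul, mul_assoc, map_sub, one_mul,
      PowerSeries.coeff_C_mul, PowerSeries.coeff_succ_X_mul, PowerSeries.coeff_mk]
    rw [show stirling1 (n + 2) (m + 1) = stirling1 (n + 1) m + (n + 1) * stirling1 (n + 1) (m + 1)
      from rfl, Nat.factorial_succ (n + 1), Nat.factorial_succ n]
    push_cast
    rw [pow_succ]
    field_simp
    ring

lemma stirSer_one : stirSer 1 = - PowerSeries.X := by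
  ext m
  rcases m with _ | _ | m <;> simp [stirSer, stirling1, PowerSeries.coeff_X]

lemma bellSer_mul_stirSer (n : ℕ) : bellSer n * stirSer (n + 1) =
    - (PowerSeries.C (1 / ((n : ℝ) + 1)) * PowerSeries.X) := by
  induction n with
  | zero => simp [bellSer_zero, stirSer_one]
  | succ n ih =>
    have h3 : (n : ℝ) + 2 ≠ 0 := by positivity
    have hC : PowerSeries.C (((n : ℝ) + 1) / ((n : ℝ) + 2)) * PowerSeries.C (1 / ((n : ℝ) + 1)) =
        PowerSeries.C (1 / ((n : ℝ) + 1 + 1)) := by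
      rw [← map_mul]
      congr 1
      field_simp
      ring
    rw [← bellSer_succ n] at ih
    rw [stirSer_succ]
    push_cast
    rw [← hC]
    linear_combination PowerSeries.C (((n : ℝ) + 1) / ((n : ℝ) + 2)) * ih

/-! ### Recurrence for the coefficients -/

/-- The coefficient of `X^m` in `-Y_j S_l`. -/
noncomputable def cf (m j l : ℕ) : ℝ := - PowerSeries.coeff m (bellSer j * stirSer l)

/-- The Cauchy product has one more term, `h = m + 1`, which vanishes because `s(l + 1, 0) = 0`. -/
lemma coeff_eq (m j l : ℕ) : (-1 : ℝ) ^ m *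
      ∑ h ∈ Finset.range (m + 1), (-1 : ℝ) ^ h * (bellNum h j / (Nat.factorial h : ℝ)) *
        ((stirling1 (l + 1) (m + 1 - h) : ℝ) / (Nat.factorial (l + 1) : ℝ)) =
    cf (m + 1) j (l + 1) := by
  rw [cf, PowerSeries.coeff_mul, Finset.Nat.sum_antidiagonal_eq_sum_range_succ_mk,
    Finset.sum_range_succ _ (m + 1)]
  simp only [bellSer, stirSer, PowerSeries.coeff_mk, Nat.sub_self, stirling1_succ_zero]
  rw [Finset.mul_sum, Nat.cast_zero, zero_div, mul_zero, mul_zero, add_zero,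
    ← Finset.sum_neg_distrib]
  refine Finset.sum_congr rfl fun h hh => ?_
  have hh' : h ≤ m := by have := Finset.mem_range.mp hh; omega
  obtain ⟨d, rfl⟩ := Nat.exists_eq_add_of_le hh'
  rw [show h + d + 1 - h = d + 1 by omega]
  have h1 : (-1 : ℝ) ^ h * (-1 : ℝ) ^ h = 1 := by rw [← mul_pow]; simp
  rw [pow_add, pow_succ]
  linear_combination ((-1 : ℝ) ^ d * (bellNum h j / (Nat.factorial h : ℝ)) *
    ((stirling1 (l + 1) (d + 1) : ℝ) / (Nat.factorial (l + 1) : ℝ))) * h1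

lemma cf_rec (m j l : ℕ) : cf (m + 1) (j + 1) l = cf (m + 1) j l + cf m (j + 1) l / ((j : ℝ) + 1) := by
  unfold cf
  rw [← bellSer_succ j]
  simp only [linFac, sub_mul, mul_assoc, map_sub, one_mul,
      PowerSeries.coeff_C_mul, PowerSeries.coeff_succ_X_mul]
  ring

lemma cf_zero (j l : ℕ) : cf 0 j (l + 1) = 0 := by
  simp [cf, bellSer, stirSer, stirling1_succ_zero]

/-- The new index `l = j + 1` contributes nothing to `cf_rec` from the exponent `2` on. -/
lemma cf_top (m j : ℕ) : cf (m + 2) j (j + 1) = 0 := by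
  simp [cf, bellSer_mul_stirSer]

lemma cf_top_one (j : ℕ) : cf 1 j (j + 1) = 1 / ((j : ℝ) + 1) := by
  simp [cf, bellSer_mul_stirSer]

/-! ### The iterated integral -/

/-- The term-by-term integrated binomial expansion `Σ_{k=1}^j C(j, k) x^k / k^m`. -/
noncomputable def expansion (x : ℝ) (m j : ℕ) : ℝ :=
  ∑ i ∈ Finset.range j, (Nat.choose j (i + 1) : ℝ) * x ^ (i + 1) / ((i : ℝ) + 1) ^ m

lemma expansion_zero (x : ℝ) (j : ℕ) : expansion x 0 j = (x + 1) ^ j - 1 := by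
  rw [add_pow, Finset.sum_range_succ', expansion]
  simp [mul_comm]

/-- A consequence of Pascal's rule and `C(j, k - 1) = (k / (j + 1)) C(j + 1, k)`. -/
lemma expansion_rec (x : ℝ) (m j : ℕ) :
    expansion x (m + 1) (j + 1) = expansion x (m + 1) j + expansion x m (j + 1) / ((j : ℝ) + 1) := by
  have h : expansion x (m + 1) j = ∑ i ∈ Finset.range (j + 1),
      (Nat.choose j (i + 1) : ℝ) * x ^ (i + 1) / ((i : ℝ) + 1) ^ (m + 1) := by
    rw [Finset.sum_range_succ, Nat.choose_succ_self]
    simp [expansion]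
  rw [h, expansion, expansion, Finset.sum_div, ← Finset.sum_add_distrib]
  refine Finset.sum_congr rfl fun i _ => ?_
  have h1 : ((Nat.choose (j + 1) (i + 1) : ℕ) : ℝ) = Nat.choose j i + Nat.choose j (i + 1) := by
    rw [Nat.choose_succ_succ]; push_cast; rfl
  have h2 : ((j : ℝ) + 1) * Nat.choose j i = Nat.choose (j + 1) (i + 1) * ((i : ℝ) + 1) := by
    exact_mod_cast Nat.add_one_mul_choose_eq j i
  have h3 : (i : ℝ) + 1 ≠ 0 := by positivity
  have h4 : (j : ℝ) + 1 ≠ 0 := by positivity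
  have h5 : (Nat.choose j (i + 1) : ℝ) =
      Nat.choose (j + 1) (i + 1) - Nat.choose (j + 1) (i + 1) * ((i : ℝ) + 1) / ((j : ℝ) + 1) := by
    rw [← h2, h1]
    field_simp
    ring
  rw [h5, pow_succ ((i : ℝ) + 1) m]
  field_simp
  ring

lemma iterInt_expand (a : ℝ) (j m : ℕ) (z : ℝ) :
    iterInt (fun t => (a * t + 1) ^ j - 1) m z = expansion (a * z) m j := by
  induction m generalizing z with
  | zero => rw [iterInt, expansion_zero]
  | succ m ih =>
    rw [iterInt]
    have h : ∫ t in (0:ℝ)..z, iterInt (fun t => (a * t + 1) ^ j - 1) m t / t =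
        ∫ t in (0:ℝ)..z, ∑ i ∈ Finset.range j,
          (Nat.choose j (i + 1) : ℝ) * a ^ (i + 1) / ((i : ℝ) + 1) ^ m * t ^ i := by
      -- at `t = 0` the left integrand has the junk value `0`, so equality holds only a.e.
      refine intervalIntegral.integral_congr_ae ?_
      filter_upwards [MeasureTheory.Measure.ae_ne MeasureTheory.volume (0 : ℝ)] with t ht _
      rw [ih, expansion, Finset.sum_div]
      refine Finset.sum_congr rfl fun i _ => ?_
      rw [mul_pow, pow_succ t i]
      field_simp
    rw [h, intervalIntegral.integral_finsetSum
      (fun i _ => (Continuous.intervalIntegrable (by fun_prop) _ _))]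
    rw [expansion]
    refine Finset.sum_congr rfl fun i _ => ?_
    rw [intervalIntegral.integral_const_mul, integral_pow, mul_pow]
    simp only [ne_eq, Nat.succ_ne_zero, not_false_eq_true, zero_pow, sub_zero]
    field_simp
    ring

lemma expansion_eq_sum_cf (x : ℝ) (m j : ℕ) : expansion x (m + 1) j =
    ∑ l ∈ Finset.range j, ((x + 1) ^ (l + 1) - 1) * cf (m + 1) j (l + 1) := by
  induction m generalizing j with
  | zero =>
    induction j with
    | zero => simp [expansion]
    | succ j ihj =>
      rw [expansion_rec, ihj, expansion_zero, Finset.sum_range_succ]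
      simp only [cf_rec, cf_zero, zero_div, add_zero, zero_add, cf_top_one]
      ring
  | succ m ih =>
    induction j with
    | zero => simp [expansion]
    | succ j ihj =>
      rw [expansion_rec, ihj, ih]
      simp only [cf_rec (m + 1), mul_add, Finset.sum_add_distrib]
      rw [Finset.sum_range_succ (fun l => ((x + 1) ^ (l + 1) - 1) * cf (m + 1 + 1) j (l + 1)),
        cf_top, mul_zero, add_zero, Finset.sum_div]
      simp only [mul_div_assoc]

/-- Proposition 3.4: the `m`-fold iterated integral of
`((a t_m + 1)^j - 1)/(t_1 ⋯ t_m)` via Bell and Stirling numbers. -/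
theorem iterInt_eq_bell_stirling (a z : ℝ) (ha : a ≠ 0) (hz : 0 < z)
    (m j : ℕ) (hm : 0 < m) (hj : 0 < j) :
    iterInt (fun t => (a * t + 1) ^ j - 1) m z =
      (-1 : ℝ) ^ (m - 1) *
        ∑ l ∈ Finset.Icc 1 j,
          ((a * z + 1) ^ l - 1) *
            ∑ h ∈ Finset.range m,
              (-1 : ℝ) ^ h * (bellNum h j / (Nat.factorial h : ℝ)) *
                ((stirling1 l (m - h) : ℝ) / (Nat.factorial l : ℝ)) := by
  obtain ⟨m, rfl⟩ : ∃ k, m = k + 1 := ⟨m - 1, by omega⟩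
  rw [iterInt_expand, expansion_eq_sum_cf, Nat.add_sub_cancel, Finset.mul_sum,
    Finset.range_eq_Ico, Finset.sum_Ico_add' (fun l => ((a * z + 1) ^ l - 1) * cf (m + 1) j l) 0 j 1]
  refine Finset.sum_congr (by ext; simp) fun l hl => ?_
  obtain ⟨l, rfl⟩ : ∃ k, l = k + 1 := ⟨l - 1, by have := Finset.mem_Ico.mp hl; omega⟩
  rw [← coeff_eq]
  ring
end
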